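/- arXiv:1501.02212 — 2 statements merged into one kernel-verified Lean document; each statement's English description precedes it below -/
import Mathlib

section
/- Let k ≥ 2 be a natural number. The map (x, y) ↦ V_k(x, y) from ℕ × ℕ to ℕ is injective. -/
/-- The j-th binary digit of `y` (least significant has index 0). -/
def bit (y j : ℕ) : ℕ := y / 2 ^ j % 2

/-- The counter encoding `V_k(x,y)` of the Turing-machine tape `bin(x)#bin(y)^R`,
with `k` bits per tape symbol. -/
def V (k x y : ℕ) : ℕ :=
  2 ^ (k * Nat.size y) * (2 ^ k * x + 1) +
    ∑ j ∈ Finset.range (Nat.size y), 2 ^ (k * (Nat.size y - 1 - j)) * (2 + bit y j)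

/-!
Appending the digits of `y` to the tape one at a time turns `V_k(x, y)` into a Horner scheme: start
from `2 ^ k * x + 1` and, for each binary digit `c` of `y`, replace the counter `n` by
`2 ^ k * n + (2 + c)`. Since `2 ^ k > 3`, each step is undone by division by `2 ^ k`, and the
remainder tells a digit (remainder `2` or `3`) from the separator (remainder `1`). So the counter
determines both `x` and the list of binary digits of `y`.
-/

theorem foldl_eq_foldl_iff_of_injective2 {α β : Type*} {f : α → β → α}
    (hf : Function.Injective2 f) {a a' : α} (ha : ∀ n c, f n c ≠ a) (ha' : ∀ n c, f n c ≠ a')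
    {l l' : List β} : l.foldl f a = l'.foldl f a' ↔ a = a' ∧ l = l' := by
  refine ⟨fun h ↦ ?_, by rintro ⟨rfl, rfl⟩; rfl⟩
  induction l using List.reverseRecOn generalizing l' with
  | nil =>
    rcases l'.eq_nil_or_concat' with rfl | ⟨t', c', rfl⟩
    · exact ⟨h, rfl⟩
    · rw [List.foldl_concat] at h
      exact absurd h.symm (ha _ _)
  | append_singleton t c ih =>
    rcases l'.eq_nil_or_concat' with rfl | ⟨t', c', rfl⟩
    · rw [List.foldl_concat] at h
      exact absurd h (ha' _ _)
    · rw [List.foldl_concat, List.foldl_concat, hf.eq_iff] at h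
      obtain ⟨htail, rfl⟩ := h
      obtain ⟨rfl, rfl⟩ := ih htail
      exact ⟨rfl, rfl⟩

theorem foldl_range_mul_add {R : Type*} [Semiring R] (b a : R) (d : ℕ → R) (m : ℕ) :
    (List.range m).foldl (fun n j ↦ b * n + d j) a =
      b ^ m * a + ∑ j ∈ Finset.range m, b ^ (m - 1 - j) * d j := by
  induction m with
  | zero => simp
  | succ m ih =>
    have shift : ∑ j ∈ Finset.range m, b ^ (m - j) * d j =
        b * ∑ j ∈ Finset.range m, b ^ (m - 1 - j) * d j := by
      rw [Finset.mul_sum]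
      refine Finset.sum_congr rfl fun j hj ↦ ?_
      have hexp : m - j = m - 1 - j + 1 := by grind
      rw [hexp, pow_succ', mul_assoc]
    rw [List.range_succ, List.foldl_concat, ih, Finset.sum_range_succ, Nat.add_sub_cancel, shift,
      Nat.sub_self, pow_zero, one_mul, pow_succ', mul_assoc, mul_add, add_assoc]

theorem bits_injective : Function.Injective Nat.bits := fun y y' h ↦
  Nat.eq_of_testBit_eq fun i ↦ by rw [Nat.testBit_eq_inth, Nat.testBit_eq_inth, h]

theorem bits_eq_map_testBit (y : ℕ) : y.bits = (List.range y.size).map y.testBit := by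
  refine List.ext_getElem (by simp [Nat.size_eq_bits_len]) fun i hi _ ↦ ?_
  rw [List.getElem_map, List.getElem_range, Nat.testBit_eq_inth, List.getI_eq_getElem _ hi]

theorem mul_add_eq_mul_add_iff {b n n' r r' : ℕ} (hr : r < b) (hr' : r' < b) :
    b * n + r = b * n' + r' ↔ n = n' ∧ r = r' := by
  refine ⟨fun h ↦ ?_, by rintro ⟨rfl, rfl⟩; rfl⟩
  have hrem : r = r' := by
    rw [← Nat.mod_eq_of_lt hr, ← Nat.mul_add_mod b n r, h, Nat.mul_add_mod, Nat.mod_eq_of_lt hr']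
  subst hrem
  exact ⟨Nat.eq_of_mul_eq_mul_left (Nat.zero_lt_of_lt hr) (Nat.add_right_cancel h), rfl⟩

/-- Appends the tape symbol for the binary digit `c` to the tape stored in the counter `n`, each
symbol being one base-`b` digit; the binary digits `0` and `1` are the symbols `2` and `3`. -/
def appendBit (b n : ℕ) (c : Bool) : ℕ := b * n + (2 + c.toNat)

theorem appendBit_injective2 {b : ℕ} (hb : 3 < b) : Function.Injective2 (appendBit b) := by
  intro n n' c c' h
  have symbol_lt (c : Bool) : 2 + c.toNat < b := by have := c.toNat_le; omega
  obtain ⟨hn, hc⟩ := (mul_add_eq_mul_add_iff (symbol_lt c) (symbol_lt c')).mp h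
  have toNat_injective : Function.Injective Bool.toNat := by decide
  exact ⟨hn, toNat_injective (Nat.add_left_cancel hc)⟩

theorem appendBit_ne_mul_add_one {b : ℕ} (hb : 3 < b) (x n : ℕ) (c : Bool) :
    appendBit b n c ≠ b * x + 1 := by
  intro h
  have hc := c.toNat_le
  obtain ⟨-, hsymbol⟩ := (mul_add_eq_mul_add_iff (by omega) (by omega)).mp h
  omega

theorem V_eq_foldl_appendBit (k x y : ℕ) :
    V k x y = y.bits.foldl (appendBit (2 ^ k)) (2 ^ k * x + 1) := by
  rw [bits_eq_map_testBit, List.foldl_map]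
  simp only [appendBit, foldl_range_mul_add, Nat.toNat_testBit, V, bit, pow_mul]

theorem V_injective (k : ℕ) (hk : 2 ≤ k) :
    Function.Injective (fun p : ℕ × ℕ => V k p.1 p.2) := by
  have hb : 3 < 2 ^ k := Nat.pow_le_pow_right two_pos hk
  rintro ⟨x, y⟩ ⟨x', y'⟩ (h : V k x y = V k x' y')
  rw [V_eq_foldl_appendBit, V_eq_foldl_appendBit,
    foldl_eq_foldl_iff_of_injective2 (appendBit_injective2 hb) (appendBit_ne_mul_add_one hb x)
      (appendBit_ne_mul_add_one hb x')] at h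
  obtain ⟨hsep, hbits⟩ := h
  have hx : x = x' := ((mul_add_eq_mul_add_iff (by omega) (by omega)).mp hsep).1
  rw [hx, bits_injective hbits]
end

section
/- Let k ≥ 2 and let x, y be natural numbers with m = size(y). Then the m-fold iterate of the step (u, v) ↦ (2^k·u + 2 + (v mod 2), v/2) applied to the pair (2^k·x + 1, y) equals (V_k(x,y), 0). (This is the correctness of the input-preparation loop of the counter machine simulating a linear-space Turing machine: starting from the value 2^k·x+1, it repeatedly divides the counter holding y by 2 and multiplies the other counter by 2^k while adding the code of the extracted bit, until the counter holding y is 0.) -/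
/-!
The loop is Horner's rule: each pass multiplies the accumulator by the base `b` and adds the code
of the current symbol, so the `j`-th of `n` symbols ends up with weight `b ^ (n - 1 - j)`. The
`j`-th symbol is the parity of `y / 2 ^ j`, and halving `y` as many times as it has binary digits
leaves `0`.
-/

theorem iterate_mul_add_eq_sum {R S : Type*} [Semiring R] (b : R) (c : S → R) (f : S → S)
    (n : ℕ) (u : R) (s : S) :
    (fun p : R × S => (b * p.1 + c p.2, f p.2))^[n] (u, s) =
      (b ^ n * u + ∑ j ∈ Finset.range n, b ^ (n - 1 - j) * c (f^[j] s), f^[n] s) := by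
  induction n generalizing u s with
  | zero => simp
  | succ n ih =>
    -- Peeling off the first pass, not the last, keeps the weights of the other symbols unchanged.
    simp only [Function.iterate_succ_apply, ih, Finset.sum_range_succ', Nat.add_sub_cancel,
      Nat.sub_sub, Nat.add_comm 1, Nat.sub_zero, Function.iterate_zero_apply]
    rw [mul_add, ← mul_assoc, ← pow_succ, add_assoc, add_comm (b ^ n * c s)]

theorem iterate_nat_div (d n y : ℕ) : (· / d)^[n] y = y / d ^ n := by
  induction n with
  | zero => simp
  | succ n ih => rw [Function.iterate_succ_apply', ih, Nat.div_div_eq_div_mul, pow_succ]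

theorem input_preparation_correct_general {R : Type*} [Semiring R] (b u : R) (c : ℕ → R) (y : ℕ) :
    (fun p : R × ℕ => (b * p.1 + c (p.2 % 2), p.2 / 2))^[Nat.size y] (u, y) =
      (b ^ Nat.size y * u +
        ∑ j ∈ Finset.range (Nat.size y), b ^ (Nat.size y - 1 - j) * c (bit y j), 0) := by
  rw [iterate_mul_add_eq_sum b (fun v => c (v % 2)) (· / 2)]
  simp only [iterate_nat_div, Nat.div_eq_of_lt (Nat.lt_size_self y), bit]

theorem input_preparation_correct (k x y : ℕ) (hk : 2 ≤ k) :
    (fun p : ℕ × ℕ => (2 ^ k * p.1 + 2 + p.2 % 2, p.2 / 2))^[Nat.size y]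
      (2 ^ k * x + 1, y) = (V k x y, 0) := by
  simpa only [V, pow_mul, add_assoc] using
    input_preparation_correct_general (2 ^ k) (2 ^ k * x + 1) (2 + ·) y
end
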